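/- arXiv:1704.08501 — 5 statements merged into one kernel-verified Lean document; each statement's English description precedes it below -/
import Mathlib

section
/- Let f : ℝ³ → ℝ be Lebesgue measurable with f(p) ≥ 0 for almost every p, f not equal to 0 almost everywhere, and ∫_{ℝ³} |p| f(p) dp < ∞. For p ∈ ℝ³ write p⁰ = |p| and (p^α)_{α=0,1,2,3} = (|p|, p¹, p², p³), and define the 4×4 matrix T by T^{αβ} = ∫_{ℝ³} p^α p^β f(p) d³p / |p| (all these integrals converge absolutely since |p^α p^β|/|p| ≤ |p|). Then T is symmetric and positive definite: for every nonzero X = (x₀, x₁, x₂, x₃) ∈ ℝ⁴ one has XᵀTX = ∫_{ℝ³} (x₀|p| + x₁p¹ + x₂p² + x₃p³)² f(p) d³p/|p| > 0. -/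
open MeasureTheory Real Set Matrix

/-!
The integrand of `XᵀTX` is `(X_α p^α)² f(p)/|p| ≥ 0`, so `XᵀTX ≥ 0`, with equality only if
`(X_α p^α)² f(p)/|p|` vanishes almost everywhere. Since `f` is not a.e. zero, strict positivity
reduces to the fact (`ae_linearForm_ne_zero`) that `x₀|p| + x₁p¹ + x₂p² + x₃p³ ≠ 0` for almost
every `p` when `X ≠ 0`.

Zeros of this form lie on the quadric `x₀²|p|² = (x·p)²`. For a direction `v` with
`x₀²|v|² ≠ (x·v)²` (`exists_noncharacteristic`), each line parallel to `v` meets the quadric in the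
zeros of a genuinely quadratic polynomial, hence in a finite set; Fubini along these lines shows
that the zero set is null. The identity for `XᵀTX` is linearity of the integral, all moments being
dominated by `|p| f(p)`.
-/

/-- A direction on which the quadratic form `x₀²|v|² - (x·v)²` is nonzero: take `v = x` if `x₀ = 0`,
and `v ≠ 0` orthogonal to `x` otherwise. -/
lemma exists_noncharacteristic (x₀ a b c : ℝ) (h : ¬ (x₀ = 0 ∧ a = 0 ∧ b = 0 ∧ c = 0)) :
    ∃ u v w : ℝ, x₀ ^ 2 * (u ^ 2 + v ^ 2 + w ^ 2) - (a * u + b * v + c * w) ^ 2 ≠ 0 := by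
  by_cases h0 : x₀ = 0
  · refine ⟨a, b, c, fun hz => h ⟨h0, ?_⟩⟩
    have hs : a * a + b * b + c * c = 0 := by
      have : (a * a + b * b + c * c) ^ 2 = 0 := by rw [h0] at hz; linarith
      exact pow_eq_zero_iff (two_ne_zero) |>.1 this
    refine ⟨?_, ?_, ?_⟩ <;> nlinarith [mul_self_nonneg a, mul_self_nonneg b, mul_self_nonneg c]
  · by_cases hab : a = 0 ∧ b = 0
    · refine ⟨1, 0, 0, ?_⟩
      simp [hab.1, h0]
    · refine ⟨b, -a, 0, ?_⟩
      have h1 : 0 < b ^ 2 + a ^ 2 := by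
        rcases not_and_or.1 hab with ha | hb <;> positivity
      have h2 : 0 < x₀ ^ 2 := by positivity
      have := mul_pos h2 h1
      intro hz
      nlinarith

lemma finite_quadratic_zeros (A B C : ℝ) (hA : A ≠ 0) :
    {t : ℝ | A * t ^ 2 + B * t + C = 0}.Finite := by
  rcases Set.eq_empty_or_nonempty {t : ℝ | A * t ^ 2 + B * t + C = 0} with h | ⟨r, hr⟩
  · rw [h]; exact Set.finite_empty
  · -- By Vieta, the only other possible root is `-B/A - r`.
    refine (Set.toFinite {r, -B / A - r}).subset fun t ht => ?_
    simp only [Set.mem_ofPred_eq] at hr ht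
    have : (t - r) * (A * (t + r) + B) = 0 := by linear_combination ht - hr
    rcases mul_eq_zero.1 this with h | h
    · left; linarith
    · right
      simp only [Set.mem_singleton_iff]
      field_simp
      linarith

lemma ae_linearForm_ne_zero (x₀ a b c : ℝ) (h : ¬ (x₀ = 0 ∧ a = 0 ∧ b = 0 ∧ c = 0)) :
    ∀ᵐ p : EuclideanSpace ℝ (Fin 3), x₀ * ‖p‖ + (a * p 0 + b * p 1 + c * p 2) ≠ 0 := by
  obtain ⟨u, v, w, hv⟩ := exists_noncharacteristic x₀ a b c h
  let L : ℝ →ₗ[ℝ] EuclideanSpace ℝ (Fin 3) := LinearMap.toSpanSingleton ℝ _ !₂[u, v, w]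
  have hs : MeasurableSet
      {p : EuclideanSpace ℝ (Fin 3) | x₀ * ‖p‖ + (a * p 0 + b * p 1 + c * p 2) ≠ 0} := by
    refine (isOpen_ne_fun ?_ continuous_const).measurableSet
    fun_prop
  refine ae_mem_of_ae_add_linearMap_mem L volume volume hs fun y => ?_
  have hfin := finite_quadratic_zeros _
    (2 * x₀ ^ 2 * (y 0 * u + y 1 * v + y 2 * w)
      - 2 * (a * y 0 + b * y 1 + c * y 2) * (a * u + b * v + c * w))
    (x₀ ^ 2 * (y 0 ^ 2 + y 1 ^ 2 + y 2 ^ 2) - (a * y 0 + b * y 1 + c * y 2) ^ 2) hv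
  refine measure_mono_null (fun t ht => ?_) (hfin.measure_zero volume)
  replace ht : x₀ * ‖y + L t‖ + (a * (y + L t) 0 + b * (y + L t) 1 + c * (y + L t) 2) = 0 :=
    not_not.1 ht
  have hn : ‖y + L t‖ ^ 2 = (y 0 + t * u) ^ 2 + (y 1 + t * v) ^ 2 + (y 2 + t * w) ^ 2 := by
    simp [EuclideanSpace.norm_sq_eq, Fin.sum_univ_three, L]
  have e0 : (y + L t) 0 = y 0 + t * u := by simp [L]
  have e1 : (y + L t) 1 = y 1 + t * v := by simp [L]
  have e2 : (y + L t) 2 = y 2 + t * w := by simp [L]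
  rw [e0, e1, e2] at ht
  rw [Set.mem_ofPred_eq]
  -- Multiply the zero condition by its conjugate `x₀|p| - x·p` to reach the quadric.
  linear_combination
    (x₀ * ‖y + L t‖ - (a * (y 0 + t * u) + b * (y 1 + t * v) + c * (y 2 + t * w))) * ht
      - x₀ ^ 2 * hn

/-- The energy–momentum tensor `T^{αβ} = ∫ p^α p^β f(p) d³p/|p|` of a nonnegative,
not a.e. zero distribution `f` with finite energy moment is symmetric positive definite,
with `XᵀTX = ∫ (X_α p^α)² f d³p/|p| > 0` for every nonzero `X`. -/
theorem stmt_2 (f : EuclideanSpace ℝ (Fin 3) → ℝ)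
    (hmeas : Measurable f)
    (hnonneg : ∀ᵐ p, 0 ≤ f p)
    (hne : ¬ (∀ᵐ p, f p = 0))
    (hint : Integrable (fun p => ‖p‖ * f p)) :
    let pf : EuclideanSpace ℝ (Fin 3) → Fin 4 → ℝ := fun p => Fin.cons ‖p‖ (fun i => p i)
    let T : Matrix (Fin 4) (Fin 4) ℝ := fun α β => ∫ p, pf p α * pf p β * f p / ‖p‖
    T.IsSymm ∧
    ∀ X : Fin 4 → ℝ, X ≠ 0 →
      X ⬝ᵥ T.mulVec X = (∫ p, (∑ α, X α * pf p α) ^ 2 * f p / ‖p‖) ∧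
      0 < X ⬝ᵥ T.mulVec X := by
  intro pf T
  have hpf_meas : ∀ α, Measurable fun p => pf p α := by
    intro α
    refine Fin.cases ?_ (fun i => ?_) α
    · exact measurable_norm
    · simp only [pf, Fin.cons_succ]
      fun_prop
  have hpf_le : ∀ p α, |pf p α| ≤ ‖p‖ := by
    intro p α
    refine Fin.cases ?_ (fun i => ?_) α
    · simp [pf]
    · simpa [pf] using PiLp.norm_apply_le p i
  have hI : ∀ α β, Integrable fun p => pf p α * pf p β * f p / ‖p‖ := by
    intro α β
    refine hint.mono ((((hpf_meas α).mul (hpf_meas β)).mul hmeas).div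
      measurable_norm).aestronglyMeasurable (Filter.Eventually.of_forall fun p => ?_)
    rcases eq_or_ne p 0 with rfl | hp
    · simp
    · have hp' : 0 < ‖p‖ := norm_pos_iff.2 hp
      simp only [norm_div, norm_mul, Real.norm_eq_abs, abs_norm]
      rw [div_le_iff₀ hp']
      have := mul_le_mul (hpf_le p α) (hpf_le p β) (abs_nonneg _) hp'.le
      nlinarith [mul_le_mul_of_nonneg_right this (abs_nonneg (f p))]
  have hexp : ∀ X : Fin 4 → ℝ, (fun p => (∑ α, X α * pf p α) ^ 2 * f p / ‖p‖) =
      fun p => ∑ α, ∑ β, X α * X β * (pf p α * pf p β * f p / ‖p‖) := by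
    intro X
    funext p
    rw [sq, Finset.sum_mul_sum, Finset.sum_mul, Finset.sum_div]
    refine Finset.sum_congr rfl fun α _ => ?_
    rw [Finset.sum_mul, Finset.sum_div]
    refine Finset.sum_congr rfl fun β _ => ?_
    ring
  have hIX : ∀ X : Fin 4 → ℝ, Integrable fun p => (∑ α, X α * pf p α) ^ 2 * f p / ‖p‖ := by
    intro X
    rw [hexp X]
    exact integrable_finsetSum _ fun α _ => integrable_finsetSum _ fun β _ =>
      (hI α β).const_mul _
  refine ⟨?_, fun X hX => ?_⟩
  · ext α β
    change ∫ p, pf p β * pf p α * f p / ‖p‖ = ∫ p, pf p α * pf p β * f p / ‖p‖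
    simp only [mul_comm (pf _ β) (pf _ α)]
  have heq : X ⬝ᵥ T.mulVec X = ∫ p, (∑ α, X α * pf p α) ^ 2 * f p / ‖p‖ := by
    rw [hexp X, integral_finsetSum _ fun α _ => integrable_finsetSum _ fun β _ =>
      (hI α β).const_mul _]
    simp only [dotProduct, Matrix.mulVec]
    refine Finset.sum_congr rfl fun α _ => ?_
    rw [integral_finsetSum _ fun β _ => (hI α β).const_mul _, Finset.mul_sum]
    refine Finset.sum_congr rfl fun β _ => ?_
    rw [integral_const_mul]
    simp only [T]
    ring
  refine ⟨heq, ?_⟩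
  rw [heq]
  have hnn : 0 ≤ᵐ[volume] fun p => (∑ α, X α * pf p α) ^ 2 * f p / ‖p‖ := by
    filter_upwards [hnonneg] with p hp
    exact div_nonneg (mul_nonneg (sq_nonneg _) hp) (norm_nonneg _)
  refine lt_of_le_of_ne (integral_nonneg_of_ae hnn) fun hz => hne ?_
  have hae := (integral_eq_zero_iff_of_nonneg_ae hnn (hIX X)).1 hz.symm
  have hX' : ¬ (X 0 = 0 ∧ X 1 = 0 ∧ X 2 = 0 ∧ X 3 = 0) := by
    rintro ⟨h0, h1, h2, h3⟩
    refine hX (funext fun i => ?_)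
    fin_cases i <;> assumption
  filter_upwards [hae, ae_linearForm_ne_zero _ _ _ _ hX'] with p hp hg
  have hsum : ∑ α, X α * pf p α = X 0 * ‖p‖ + (X 1 * p 0 + X 2 * p 1 + X 3 * p 2) := by
    rw [Fin.sum_univ_succ, Fin.sum_univ_three]
    rfl
  -- The form vanishes at the origin, so `hg` also excludes `p = 0`.
  have hp0 : ‖p‖ ≠ 0 := by
    intro h0
    rw [norm_eq_zero] at h0
    subst h0
    simp at hg
  simp only [Pi.zero_apply, hsum] at hp
  simpa [hg, hp0] using hp
end

section
/- Let T be a real symmetric positive definite 4×4 matrix and let η = diag(1, −1, −1, −1). Then the set of generalized eigenvalues { μ ∈ ℝ : det(T − μ η) = 0 } contains exactly one positive element ε; moreover, for this ε there exists a nonzero vector U ∈ ℝ⁴ with T U = ε · (η U). -/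
open Matrix

/-!
Existence: along the segment `a ↦ a T - (1 - a) η` the determinant moves from `det (-η) = -1` at
`a = 0` to `det T > 0` at `a = 1`, so it vanishes at some `0 < a < 1`, and `ε = (1 - a) / a` is a
positive generalized eigenvalue.

Uniqueness: an eigenvector `U` for `ε > 0` is timelike, since `ε ⟨U, η U⟩ = ⟨U, T U⟩ > 0`.
Eigenvectors for distinct eigenvalues are `η`-orthogonal because `T` and `η` are symmetric, while
two timelike vectors are never `η`-orthogonal, by the Cauchy–Schwarz inequality for their spatial
parts (`minkowski_ne_zero`).
-/

/-- Two timelike vectors of Minkowski space are not orthogonal. -/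
lemma minkowski_ne_zero {a b c d x y z w : ℝ}
    (hU : 0 < a * a - b * b - c * c - d * d) (hV : 0 < x * x - y * y - z * z - w * w) :
    a * x - b * y - c * z - d * w ≠ 0 := by
  intro h
  have cauchy : (b * y + c * z + d * w) ^ 2 ≤
      (b * b + c * c + d * d) * (y * y + z * z + w * w) := by
    nlinarith [sq_nonneg (b * z - c * y), sq_nonneg (b * w - d * y), sq_nonneg (c * w - d * z)]
  have heq : b * y + c * z + d * w = a * x := by linarith
  have hlt : (b * b + c * c + d * d) * (y * y + z * z + w * w) < (a * a) * (x * x) :=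
    mul_lt_mul'' (by linarith) (by linarith)
      (by linarith [mul_self_nonneg b, mul_self_nonneg c, mul_self_nonneg d])
      (by linarith [mul_self_nonneg y, mul_self_nonneg z, mul_self_nonneg w])
  rw [heq] at cauchy
  nlinarith

lemma dotProduct_minkowski (U V : Fin 4 → ℝ) :
    U ⬝ᵥ (Matrix.diagonal ![1, -1, -1, -1] : Matrix (Fin 4) (Fin 4) ℝ) *ᵥ V =
      U 0 * V 0 - U 1 * V 1 - U 2 * V 2 - U 3 * V 3 := by
  simp [dotProduct, Fin.sum_univ_four, Matrix.mulVec_diagonal]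
  ring

lemma exists_generalized_eigenvector {T η : Matrix (Fin 4) (Fin 4) ℝ} {ε : ℝ}
    (h : (T - ε • η).det = 0) :
    ∃ U : Fin 4 → ℝ, U ≠ 0 ∧ T.mulVec U = ε • η.mulVec U := by
  obtain ⟨U, hU, hz⟩ := Matrix.exists_mulVec_eq_zero_iff.mpr h
  refine ⟨U, hU, ?_⟩
  rwa [Matrix.sub_mulVec, Matrix.smul_mulVec, sub_eq_zero] at hz

lemma eigenvector_timelike {T η : Matrix (Fin 4) (Fin 4) ℝ} (hT : T.PosDef) {ε : ℝ} (hε : 0 < ε)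
    {U : Fin 4 → ℝ} (hU : U ≠ 0) (h : T.mulVec U = ε • η.mulVec U) :
    0 < U ⬝ᵥ η *ᵥ U := by
  have hpos : 0 < U ⬝ᵥ T *ᵥ U := by simpa using hT.dotProduct_mulVec_pos hU
  rw [h, dotProduct_smul, smul_eq_mul] at hpos
  exact pos_of_mul_pos_right hpos hε.le

lemma exists_pos_generalized_eigenvalue {T : Matrix (Fin 4) (Fin 4) ℝ} (hT : T.PosDef) :
    ∃ ε : ℝ, 0 < ε ∧ (T - ε • (Matrix.diagonal ![1, -1, -1, -1] :
      Matrix (Fin 4) (Fin 4) ℝ)).det = 0 := by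
  set η : Matrix (Fin 4) (Fin 4) ℝ := Matrix.diagonal ![1, -1, -1, -1] with hη
  let g : ℝ → ℝ := fun a => (a • T - (1 - a) • η).det
  have hg : Continuous g := by
    apply Continuous.matrix_det
    fun_prop
  have g0 : g 0 = -1 := by
    simp [g, hη, Fin.prod_univ_four]
  have g1 : 0 < g 1 := by simpa [g] using hT.det_pos
  obtain ⟨a, ⟨ha0, ha1⟩, ha⟩ := intermediate_value_Icc (zero_le_one (α := ℝ)) hg.continuousOn
    (show (0 : ℝ) ∈ Set.Icc (g 0) (g 1) from ⟨by rw [g0]; norm_num, g1.le⟩)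
  have ha0' : 0 < a := lt_of_le_of_ne ha0 (by rintro rfl; rw [g0] at ha; norm_num at ha)
  have ha1' : a < 1 := lt_of_le_of_ne ha1 (by rintro rfl; exact g1.ne' ha)
  refine ⟨(1 - a) / a, div_pos (by linarith) ha0', ?_⟩
  have hfac : a • T - (1 - a) • η = a • (T - ((1 - a) / a) • η) := by
    rw [smul_sub, smul_smul, mul_div_cancel₀ _ ha0'.ne']
  have hdet : (a • T - (1 - a) • η).det = 0 := ha
  rw [hfac, Matrix.det_smul] at hdet
  exact (mul_eq_zero.mp hdet).resolve_left (pow_ne_zero _ ha0'.ne')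

/-- Pairing `T U = μ η U` with `V` and `T V = ν η V` with `U` gives
`(μ - ν) ⟨U, η V⟩ = 0`; the second factor is nonzero for timelike `U` and `V`. -/
lemma pos_generalized_eigenvalue_unique {T : Matrix (Fin 4) (Fin 4) ℝ} (hT : T.PosDef)
    {μ ν : ℝ} (hμ : 0 < μ) (hν : 0 < ν)
    (hμd : (T - μ • (Matrix.diagonal ![1, -1, -1, -1] : Matrix (Fin 4) (Fin 4) ℝ)).det = 0)
    (hνd : (T - ν • (Matrix.diagonal ![1, -1, -1, -1] : Matrix (Fin 4) (Fin 4) ℝ)).det = 0) :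
    μ = ν := by
  obtain ⟨U, hU, hTU⟩ := exists_generalized_eigenvector hμd
  obtain ⟨V, hV, hTV⟩ := exists_generalized_eigenvector hνd
  have tU := eigenvector_timelike hT hμ hU hTU
  have tV := eigenvector_timelike hT hν hV hTV
  rw [dotProduct_minkowski] at tU tV
  have hsymm : U ⬝ᵥ T *ᵥ V = V ⬝ᵥ T *ᵥ U := by
    have ht : Tᵀ = T := by simpa using hT.isHermitian.eq
    rw [Matrix.dotProduct_mulVec, ← Matrix.mulVec_transpose, ht, dotProduct_comm]
  rw [hTU, hTV, dotProduct_smul, dotProduct_smul, dotProduct_minkowski, dotProduct_minkowski,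
    smul_eq_mul, smul_eq_mul] at hsymm
  apply mul_right_cancel₀ (minkowski_ne_zero tU tV)
  linarith

/-- For a real symmetric positive definite 4×4 matrix `T` and the Minkowski metric
`η = diag(1,−1,−1,−1)`, there is exactly one positive generalized eigenvalue `ε`
(i.e. `det(T − ε η) = 0`), and for it there is a nonzero `U` with `T U = ε η U`. -/
theorem stmt_3 (T : Matrix (Fin 4) (Fin 4) ℝ) (hT : T.PosDef)
    (η : Matrix (Fin 4) (Fin 4) ℝ) (hη : η = Matrix.diagonal ![1, -1, -1, -1]) :
    (∃! ε : ℝ, 0 < ε ∧ (T - ε • η).det = 0) ∧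
    (∀ ε : ℝ, 0 < ε → (T - ε • η).det = 0 →
      ∃ U : Fin 4 → ℝ, U ≠ 0 ∧ T.mulVec U = ε • η.mulVec U) := by
  subst hη
  refine ⟨?_, fun ε _ h => exists_generalized_eigenvector h⟩
  obtain ⟨ε, hε, hd⟩ := exists_pos_generalized_eigenvalue hT
  exact ⟨ε, ⟨hε, hd⟩, fun ν ⟨hν, hνd⟩ => pos_generalized_eigenvalue_unique hT hν hε hνd hd⟩
end

section
/- Let T be a real symmetric positive definite 4×4 matrix, let η = diag(1, −1, −1, −1), let ε > 0, and let U = (U₀, U₁, U₂, U₃) ∈ ℝ⁴ be nonzero with T U = ε · (η U). Then U₀² > U₁² + U₂² + U₃². In particular U₀ ≠ 0, and the velocity vector u := (U₁/U₀, U₂/U₀, U₃/U₀) satisfies |u| < 1 (the speed of light in units c = 1). -/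
open Matrix

/-- A generalized eigenvector `U` of a symmetric positive definite `T` with respect to the
Minkowski metric `η = diag(1,−1,−1,−1)` and positive generalized eigenvalue `ε` is timelike:
`U₀² > U₁² + U₂² + U₃²`; in particular `U₀ ≠ 0` and the velocity `u = (U₁/U₀, U₂/U₀, U₃/U₀)`
is subluminal, `|u| < 1`. -/
theorem stmt_4 (T η : Matrix (Fin 4) (Fin 4) ℝ) (hT : T.PosDef)
    (hη : η = Matrix.diagonal ![1, -1, -1, -1])
    (ε : ℝ) (hε : 0 < ε) (U : Fin 4 → ℝ) (hU : U ≠ 0)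
    (heig : T.mulVec U = ε • η.mulVec U) :
    (U 1) ^ 2 + (U 2) ^ 2 + (U 3) ^ 2 < (U 0) ^ 2 ∧
    U 0 ≠ 0 ∧
    Real.sqrt ((U 1 / U 0) ^ 2 + (U 2 / U 0) ^ 2 + (U 3 / U 0) ^ 2) < 1 := by
  -- Pairing the eigenvalue equation with `U` gives `0 < Uᵀ T U = ε (U₀² - U₁² - U₂² - U₃²)`.
  have hpos := hT.dotProduct_mulVec_pos hU
  have hform : star U ⬝ᵥ (ε • η.mulVec U)
      = ε * (U 0 ^ 2 - (U 1 ^ 2 + U 2 ^ 2 + U 3 ^ 2)) := by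
    subst hη
    simp [dotProduct, Fin.sum_univ_four, mulVec_diagonal]
    ring
  rw [heig, hform] at hpos
  have hlt : U 1 ^ 2 + U 2 ^ 2 + U 3 ^ 2 < U 0 ^ 2 :=
    sub_pos.mp ((mul_pos_iff_of_pos_left hε).mp hpos)
  have hsq : 0 < U 0 ^ 2 := lt_of_le_of_lt (by positivity) hlt
  refine ⟨hlt, fun h => by simp [h] at hsq, ?_⟩
  rw [Real.sqrt_lt' one_pos, one_pow, div_pow, div_pow, div_pow, ← add_div, ← add_div]
  exact (div_lt_one hsq).mpr hlt
end

section
/- Define for ζ > 0 the modified Bessel function of the second kind by the integral K₂(ζ) = ∫₀^∞ cosh(2ϑ) · exp(−ζ cosh ϑ) dϑ. Then lim_{ζ → 0⁺} ζ² · K₂(ζ) = 2; i.e., in the ultra-relativistic limit K₂(ζ) reduces to 2/ζ². -/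
open MeasureTheory Real Set Filter

/-!
Split `cosh (2ϑ) = sinh (2ϑ) + exp (-2ϑ)`. Since `sinh (2ϑ) = 2 sinh ϑ cosh ϑ`, the `sinh` part has
the elementary antiderivative `-2 exp (-ζ cosh ϑ) (cosh ϑ / ζ + 1 / ζ²)`, so its integral, times
`ζ²`, is exactly `2 exp (-ζ) (ζ + 1)` (`integral_sinh_part`), which tends to `2`. The remaining
integral lies between `0` and `∫ exp (-2ϑ) = 1/2` (`integral_exp_part_mem`), so it vanishes in the
limit after multiplication by `ζ²`.
-/

lemma tendsto_cosh_atTop_atTop : Tendsto Real.cosh atTop atTop := by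
  refine tendsto_atTop_mono (f := fun x => Real.exp x / 2) (fun x => ?_)
    (Real.tendsto_exp_atTop.atTop_div_const two_pos)
  rw [Real.cosh_eq]
  linarith [Real.exp_pos (-x)]

lemma hasDerivAt_sinh_part {ζ : ℝ} (hζ : 0 < ζ) (x : ℝ) :
    HasDerivAt
      (fun ϑ => -2 * (Real.exp (-ζ * Real.cosh ϑ) * (Real.cosh ϑ / ζ + 1 / ζ ^ 2)))
      (Real.sinh (2 * x) * Real.exp (-ζ * Real.cosh x)) x := by
  have hc := Real.hasDerivAt_cosh x
  have h := (((hc.const_mul (-ζ)).exp).mul ((hc.div_const ζ).add_const (1 / ζ ^ 2))).const_mul (-2)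
  refine h.congr_deriv ?_
  rw [Real.sinh_two_mul]
  field_simp
  ring

lemma tendsto_sinh_part {ζ : ℝ} (hζ : 0 < ζ) :
    Tendsto (fun ϑ => -2 * (Real.exp (-ζ * Real.cosh ϑ) * (Real.cosh ϑ / ζ + 1 / ζ ^ 2)))
      atTop (nhds 0) := by
  have hu : Tendsto (fun ϑ => ζ * Real.cosh ϑ) atTop atTop :=
    tendsto_cosh_atTop_atTop.const_mul_atTop hζ
  have h1 := (Real.tendsto_pow_mul_exp_neg_atTop_nhds_zero 1).comp hu
  have h0 := (Real.tendsto_pow_mul_exp_neg_atTop_nhds_zero 0).comp hu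
  have h := (h1.add h0).const_mul (-2 / ζ ^ 2)
  simp only [add_zero, mul_zero] at h
  refine h.congr fun ϑ => ?_
  simp only [Function.comp, neg_mul]
  field_simp

lemma sinh_part_nonneg (ζ : ℝ) {x : ℝ} (hx : x ∈ Ioi (0 : ℝ)) :
    0 ≤ Real.sinh (2 * x) * Real.exp (-ζ * Real.cosh x) :=
  mul_nonneg (Real.sinh_nonneg_iff.2 (by linarith [mem_Ioi.1 hx])) (Real.exp_pos _).le

lemma integrableOn_sinh_part {ζ : ℝ} (hζ : 0 < ζ) :
    IntegrableOn (fun ϑ => Real.sinh (2 * ϑ) * Real.exp (-ζ * Real.cosh ϑ)) (Ioi 0) :=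
  integrableOn_Ioi_deriv_of_nonneg' (fun x _ => hasDerivAt_sinh_part hζ x)
    (fun _ hx => sinh_part_nonneg ζ hx) (tendsto_sinh_part hζ)

lemma integral_sinh_part {ζ : ℝ} (hζ : 0 < ζ) :
    ζ ^ 2 * ∫ ϑ in Ioi (0 : ℝ), Real.sinh (2 * ϑ) * Real.exp (-ζ * Real.cosh ϑ)
      = 2 * Real.exp (-ζ) * (ζ + 1) := by
  rw [integral_Ioi_of_hasDerivAt_of_nonneg' (fun x _ => hasDerivAt_sinh_part hζ x)
    (fun _ hx => sinh_part_nonneg ζ hx) (tendsto_sinh_part hζ)]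
  simp only [Real.cosh_zero, mul_one]
  field_simp
  ring

lemma exp_part_le {ζ : ℝ} (hζ : 0 < ζ) (x : ℝ) :
    Real.exp (-2 * x) * Real.exp (-ζ * Real.cosh x) ≤ Real.exp (-2 * x) :=
  mul_le_of_le_one_right (Real.exp_pos _).le
    (Real.exp_le_one_iff.2 (by nlinarith [Real.cosh_pos x]))

lemma integrableOn_exp_part {ζ : ℝ} (hζ : 0 < ζ) :
    IntegrableOn (fun ϑ => Real.exp (-2 * ϑ) * Real.exp (-ζ * Real.cosh ϑ)) (Ioi 0) := by
  refine (integrableOn_exp_mul_Ioi (a := -2) (by norm_num) 0).mono'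
    (by fun_prop) (ae_of_all _ fun x => ?_)
  rw [Real.norm_of_nonneg (by positivity)]
  exact exp_part_le hζ x

lemma integral_exp_part_mem {ζ : ℝ} (hζ : 0 < ζ) :
    (∫ ϑ in Ioi (0 : ℝ), Real.exp (-2 * ϑ) * Real.exp (-ζ * Real.cosh ϑ)) ∈ Icc (0 : ℝ) (1 / 2) := by
  refine ⟨integral_nonneg fun x => by positivity, ?_⟩
  refine (integral_mono (integrableOn_exp_part hζ)
    (integrableOn_exp_mul_Ioi (a := -2) (by norm_num) 0) (exp_part_le hζ)).trans_eq ?_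
  rw [integral_exp_mul_Ioi (by norm_num)]
  norm_num

/-- Ultra-relativistic limit of the modified Bessel function of the second kind:
with `K₂(ζ) = ∫₀^∞ cosh(2ϑ) exp(−ζ cosh ϑ) dϑ`, one has `ζ² K₂(ζ) → 2` as `ζ → 0⁺`. -/
theorem stmt_7 :
    Tendsto
      (fun ζ : ℝ => ζ ^ 2 * ∫ ϑ in Ioi (0:ℝ), Real.cosh (2 * ϑ) * Real.exp (-ζ * Real.cosh ϑ))
      (nhdsWithin 0 (Ioi 0)) (nhds 2) := by
  have key : ∀ ζ : ℝ, 0 < ζ →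
      ζ ^ 2 * ∫ ϑ in Ioi (0:ℝ), Real.cosh (2 * ϑ) * Real.exp (-ζ * Real.cosh ϑ)
        = 2 * Real.exp (-ζ) * (ζ + 1) +
          ζ ^ 2 * ∫ ϑ in Ioi (0 : ℝ), Real.exp (-2 * ϑ) * Real.exp (-ζ * Real.cosh ϑ) := by
    intro ζ hζ
    rw [← integral_sinh_part hζ, ← mul_add,
      ← integral_add (integrableOn_sinh_part hζ) (integrableOn_exp_part hζ)]
    congr 2
    ext ϑ
    rw [← add_mul, neg_mul 2 ϑ, ← Real.cosh_sub_sinh]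
    ring
  have hlo : Tendsto (fun ζ : ℝ => 2 * Real.exp (-ζ) * (ζ + 1)) (nhdsWithin 0 (Ioi 0))
      (nhds 2) := by
    have h : Continuous fun ζ : ℝ => 2 * Real.exp (-ζ) * (ζ + 1) := by fun_prop
    simpa using (h.tendsto 0).mono_left nhdsWithin_le_nhds
  have hhi : Tendsto (fun ζ : ℝ => 2 * Real.exp (-ζ) * (ζ + 1) + ζ ^ 2 * (1 / 2))
      (nhdsWithin 0 (Ioi 0)) (nhds 2) := by
    have h : Continuous fun ζ : ℝ => 2 * Real.exp (-ζ) * (ζ + 1) + ζ ^ 2 * (1 / 2) := by fun_prop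
    simpa using (h.tendsto 0).mono_left nhdsWithin_le_nhds
  refine tendsto_of_tendsto_of_tendsto_of_le_of_le' hlo hhi ?_ ?_
  · filter_upwards [self_mem_nhdsWithin] with ζ hζ
    rw [key ζ hζ]
    exact le_add_of_nonneg_right (mul_nonneg (sq_nonneg ζ) (integral_exp_part_mem hζ).1)
  · filter_upwards [self_mem_nhdsWithin] with ζ hζ
    rw [key ζ hζ]
    gcongr
    exact (integral_exp_part_mem hζ).2
end

section
/- Let n > 0, T > 0 and U = (U¹, U², U³) ∈ ℝ³, set U⁰ = √(1 + (U¹)² + (U²)² + (U³)²), p = nT and h = 4T, and define the conserved quantities D := n U⁰, Mⁱ := n h U⁰ Uⁱ = 4nT U⁰ Uⁱ (i = 1, 2, 3), and 𝓔 := n h (U⁰)² − p = 4nT(U⁰)² − nT. Then 4𝓔² − 3((M¹)² + (M²)² + (M³)²) = p²(4(U⁰)² + 2)² > 0, and the primitive variables are recovered by the explicit formulas: p = (1/3) ( −𝓔 + √( 4𝓔² − 3((M¹)² + (M²)² + (M³)²) ) ), Uⁱ = Mⁱ / √( 4p(p + 𝓔) ) for i = 1, 2, 3, and n = D / √( 1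 + (U¹)² + (U²)² + (U³)² ). -/
/-!
With `a = (U⁰)²` and `|U|² = a - 1` one has `𝓔 = p(4a - 1)` and `|M|² = 16p²a(a - 1)`, so
`4𝓔² - 3|M|² = p²(16a² + 16a + 4)` is the square of the positive number `p(4a + 2)`, and
`4p(p + 𝓔) = 16p²a` is the square of the positive number `4pU⁰`. Both square roots in the recovery
formulas are therefore explicit.
-/

/-- Explicit recovery of the primitive variables `(n, U, p)` of the ultra-relativistic
Euler equations from the conservative quantities `D = nU⁰`, `Mⁱ = nhU⁰Uⁱ`,
`𝓔 = nh(U⁰)² − p` (with `p = nT`, `h = 4T`, `U⁰ = √(1+|U|²)`). -/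
theorem stmt_13 (n T : ℝ) (hn : 0 < n) (hT : 0 < T) (U : Fin 3 → ℝ) :
    let U0 : ℝ := Real.sqrt (1 + (U 0) ^ 2 + (U 1) ^ 2 + (U 2) ^ 2)
    let p : ℝ := n * T
    let h : ℝ := 4 * T
    let D : ℝ := n * U0
    let M : Fin 3 → ℝ := fun i => n * h * U0 * U i
    let En : ℝ := n * h * U0 ^ 2 - p
    0 < 4 * En ^ 2 - 3 * ((M 0) ^ 2 + (M 1) ^ 2 + (M 2) ^ 2) ∧
    4 * En ^ 2 - 3 * ((M 0) ^ 2 + (M 1) ^ 2 + (M 2) ^ 2) = (p * (4 * U0 ^ 2 + 2)) ^ 2 ∧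
    p = (1 / 3) *
      (-En + Real.sqrt (4 * En ^ 2 - 3 * ((M 0) ^ 2 + (M 1) ^ 2 + (M 2) ^ 2))) ∧
    (∀ i : Fin 3, U i = M i / Real.sqrt (4 * p * (p + En))) ∧
    n = D / Real.sqrt (1 + (U 0) ^ 2 + (U 1) ^ 2 + (U 2) ^ 2) := by
  intro U0 p h D M En
  have hU0 : 0 < U0 := Real.sqrt_pos.mpr (by positivity)
  have hsq : U0 ^ 2 = 1 + (U 0) ^ 2 + (U 1) ^ 2 + (U 2) ^ 2 := Real.sq_sqrt (by positivity)
  have hp : 0 < p := mul_pos hn hT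
  have hEn : En = p * (4 * U0 ^ 2 - 1) := by simp only [En, h, p]; ring
  have hM : ∀ i, M i = 4 * p * U0 * U i := fun i => by simp only [M, h, p]; ring
  have hdisc : 4 * En ^ 2 - 3 * ((M 0) ^ 2 + (M 1) ^ 2 + (M 2) ^ 2)
      = (p * (4 * U0 ^ 2 + 2)) ^ 2 := by
    rw [hEn, hM, hM, hM]
    linear_combination 48 * p ^ 2 * U0 ^ 2 * hsq
  have hroot : 4 * p * (p + En) = (4 * p * U0) ^ 2 := by rw [hEn]; ring
  refine ⟨?_, hdisc, ?_, fun i => ?_, ?_⟩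
  · rw [hdisc]; positivity
  · rw [hdisc, Real.sqrt_sq (by positivity), hEn]; ring
  · rw [hroot, Real.sqrt_sq (by positivity), hM]
    exact (mul_div_cancel_left₀ _ (by positivity)).symm
  · exact (mul_div_cancel_right₀ n hU0.ne').symm
end
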